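/- arXiv:2402.15284 — 3 statements merged into one kernel-verified Lean document; each statement's English description precedes it below -/
import Mathlib

section
/- (Spatiotemporal observer convergence, Theorem 2, pseudo-inverse form.) Consider the discrete-time system z_{k+1} = f(z_k), x_k = h(z_k) on ℝᵖ with output in ℝᶜ, and the observer ξ_{k+1} = a ⊙ ξ_k + B(x_k) on ℝᵐ, where a ∈ ℝᵐ has all entries aᵢ ∈ (0,1), B : ℝᶜ → ℝᵐ is linear, and ⊙ is the entrywise product. Assume T : ℝᵖ → ℝᵐ satisfies T(f(z)) = a ⊙ T(z) + B(h(z)) for all z, and assume there is a function α : ℝ → ℝ with α(0) = 0, α continuous at 0, and α monotone nondecreasing, together with a map T⁻¹ : ℝᵐ → ℝᵖ satisfying T⁻¹(T(z)) = z for all z ∈ ℝᵖ and ‖T⁻¹(ξ₁) − T⁻¹(ξ₂)‖₂ ≤ α(‖ξ₁ − ξ₂‖₂) for all ξ₁, ξ₂ ∈ ℝᵐ. Then for every initial state z₀ ∈ ℝᵖ and every initial observer state ξ₀ ∈ ℝᵐ, the estimates ẑ_k := T⁻¹(ξ_k) satisfy ‖z_k − ẑ_k‖₂ → 0 as k → ∞.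 -/
/-! Write `A` for the diagonal operator with entries `a`. The image `T z_k` of the trajectory obeys
the same driven linear recurrence as the observer state `ξ_k`, so the input cancels in the error:
`T z_k - ξ_k = A ^ k (T z₀ - ξ₀)`, which tends to zero because the entries of `A` lie in the open
unit ball. Since `z_k = T⁻¹ (T z_k)`, the estimation error is at most `α ‖T z_k - ξ_k‖`, which then
tends to zero as well. -/

open Filter Topology

theorem sub_eq_pow_apply_sub_of_recurrence {R E : Type*} [Semiring R] [AddCommGroup E]
    [Module R E] (A : Module.End R E) {u x y : ℕ → E} (hx : ∀ k, x (k + 1) = A (x k) + u k)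
    (hy : ∀ k, y (k + 1) = A (y k) + u k) (k : ℕ) :
    x k - y k = (A ^ k) (x 0 - y 0) := by
  induction k with
  | zero => rw [pow_zero, Module.End.one_apply]
  | succ k ih =>
    calc
      x (k + 1) - y (k + 1) = A (x k - y k) := by
        rw [hx, hy, add_sub_add_right_eq_sub, map_sub]
      _ = (A ^ (k + 1)) (x 0 - y 0) := by rw [ih, pow_succ', Module.End.mul_apply]

section StableObserver

variable {R E Z : Type*} [Semiring R] [SeminormedAddCommGroup E] [Module R E]
  {A : Module.End R E} {f : Z → Z} {b : Z → E} {T : Z → E}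

theorem tendsto_sub_observer_zero (hA : ∀ v, Tendsto (fun k : ℕ => (A ^ k) v) atTop (𝓝 0))
    (hT : ∀ z, T (f z) = A (T z) + b z) (z₀ : Z) {ξ : ℕ → E}
    (hξ : ∀ k, ξ (k + 1) = A (ξ k) + b (f^[k] z₀)) :
    Tendsto (fun k : ℕ => T (f^[k] z₀) - ξ k) atTop (𝓝 0) := by
  have hTz (k : ℕ) : T (f^[k + 1] z₀) = A (T (f^[k] z₀)) + b (f^[k] z₀) := by
    rw [Function.iterate_succ_apply', hT]
  have herror (k : ℕ) : T (f^[k] z₀) - ξ k = (A ^ k) (T z₀ - ξ 0) :=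
    sub_eq_pow_apply_sub_of_recurrence A (x := fun k => T (f^[k] z₀)) hTz hξ k
  simpa only [herror] using hA (T z₀ - ξ 0)

theorem observer_convergence_pseudo_inverse_general [PseudoMetricSpace Z]
    (hA : ∀ v, Tendsto (fun k : ℕ => (A ^ k) v) atTop (𝓝 0))
    (hT : ∀ z, T (f z) = A (T z) + b z) {α : ℝ → ℝ} (hα0 : α 0 = 0)
    (hαcont : ContinuousAt α 0) {Tinv : E → Z}
    (hTinvT : Function.LeftInverse Tinv T)
    (hTinv : ∀ ξ₁ ξ₂, dist (Tinv ξ₁) (Tinv ξ₂) ≤ α ‖ξ₁ - ξ₂‖) (z₀ : Z) {ξ : ℕ → E}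
    (hξ : ∀ k, ξ (k + 1) = A (ξ k) + b (f^[k] z₀)) :
    Tendsto (fun k : ℕ => dist (f^[k] z₀) (Tinv (ξ k))) atTop (𝓝 0) := by
  have hα : Tendsto α (𝓝 0) (𝓝 0) := by simpa only [hα0] using hαcont.tendsto
  have herror : Tendsto (fun k : ℕ => α ‖T (f^[k] z₀) - ξ k‖) atTop (𝓝 0) :=
    hα.comp (tendsto_zero_iff_norm_tendsto_zero.1 (tendsto_sub_observer_zero hA hT z₀ hξ))
  have hbound (k : ℕ) : dist (f^[k] z₀) (Tinv (ξ k)) ≤ α ‖T (f^[k] z₀) - ξ k‖ := by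
    simpa only [hTinvT (f^[k] z₀)] using hTinv (T (f^[k] z₀)) (ξ k)
  exact squeeze_zero (fun _ => dist_nonneg) hbound herror

end StableObserver

section Diagonal

variable {R ι : Type*} [Fintype ι] [DecidableEq ι] (p : ENNReal)

theorem toLpLin_diagonal_apply [CommRing R] (a : ι → R) (v : WithLp p (ι → R)) (i : ι) :
    Matrix.toLpLin p p (Matrix.diagonal a) v i = a i * v i :=
  Matrix.mulVec_diagonal a v.ofLp i

theorem eq_toLpLin_diagonal_add_iff [CommRing R] {a : ι → R} {v w u : WithLp p (ι → R)} :
    w = Matrix.toLpLin p p (Matrix.diagonal a) v + u ↔ ∀ i, w i = a i * v i + u i :=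
  PiLp.ext_iff.trans <| forall_congr' fun i => by
    rw [WithLp.ofLp_add, Pi.add_apply, toLpLin_diagonal_apply]

theorem tendsto_toLpLin_diagonal_pow_apply_zero [SeminormedCommRing R] {a : ι → R}
    (ha : ∀ i, ‖a i‖ < 1) (v : WithLp p (ι → R)) :
    Tendsto (fun k : ℕ => (Matrix.toLpLin p p (Matrix.diagonal a) ^ k) v) atTop (𝓝 0) := by
  have hcoord : Tendsto (fun (k : ℕ) i => a i ^ k * v i) atTop (𝓝 0) :=
    tendsto_pi_nhds.2 fun i => by
      simpa using (tendsto_pow_atTop_nhds_zero_of_norm_lt_one (ha i)).mul_const (v i)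
  refine (((PiLp.continuous_toLp p fun _ : ι => R).tendsto 0).comp hcoord).congr fun k => ?_
  ext i
  rw [← Matrix.toLpLin_pow, Matrix.diagonal_pow, toLpLin_diagonal_apply]
  rfl

end Diagonal

/-- Theorem 2, pseudo-inverse form: with a pseudo-inverse `T⁻¹`
whose increments are controlled by a modulus `α`, the state estimates
`ẑ_k = T⁻¹(ξ_k)` satisfy `‖z_k − ẑ_k‖₂ → 0`. -/
theorem observer_convergence_pseudo_inverse
    (p c m : ℕ)
    (f : EuclideanSpace ℝ (Fin p) → EuclideanSpace ℝ (Fin p))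
    (h : EuclideanSpace ℝ (Fin p) → EuclideanSpace ℝ (Fin c))
    (a : Fin m → ℝ) (ha : ∀ i, 0 < a i ∧ a i < 1)
    (B : EuclideanSpace ℝ (Fin c) →ₗ[ℝ] EuclideanSpace ℝ (Fin m))
    (T : EuclideanSpace ℝ (Fin p) → EuclideanSpace ℝ (Fin m))
    (hT : ∀ z, ∀ i, T (f z) i = a i * T z i + B (h z) i)
    (α : ℝ → ℝ) (hα0 : α 0 = 0) (hαcont : ContinuousAt α 0) (hαmono : Monotone α)
    (Tinv : EuclideanSpace ℝ (Fin m) → EuclideanSpace ℝ (Fin p))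
    (hTinvT : ∀ z, Tinv (T z) = z)
    (hTinv : ∀ ξ₁ ξ₂ : EuclideanSpace ℝ (Fin m), ‖Tinv ξ₁ - Tinv ξ₂‖ ≤ α ‖ξ₁ - ξ₂‖)
    (z₀ : EuclideanSpace ℝ (Fin p))
    (ξ : ℕ → EuclideanSpace ℝ (Fin m))
    (hrec : ∀ k, ∀ i, ξ (k + 1) i = a i * ξ k i + B (h (f^[k] z₀)) i) :
    Filter.Tendsto (fun k : ℕ => ‖f^[k] z₀ - Tinv (ξ k)‖) Filter.atTop (nhds 0) := by
  have hnorm (i : Fin m) : ‖a i‖ < 1 := by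
    simpa only [Real.norm_of_nonneg (ha i).1.le] using (ha i).2
  simpa only [dist_eq_norm] using observer_convergence_pseudo_inverse_general
    (b := fun z => B (h z)) (tendsto_toLpLin_diagonal_pow_apply_zero 2 hnorm)
    (fun z => (eq_toLpLin_diagonal_add_iff 2).2 (hT z)) hα0 hαcont hTinvT
    (fun ξ₁ ξ₂ => (dist_eq_norm _ _).trans_le (hTinv ξ₁ ξ₂)) z₀
    (fun k => (eq_toLpLin_diagonal_add_iff 2).2 (hrec k))
end

section
/- (Spatiotemporal observer convergence, Theorem 2, existence form.) Consider the discrete-time system z_{k+1} = f(z_k), x_k = h(z_k) on ℝᵖ with output in ℝᶜ, and the observer ξ_{k+1} = a ⊙ ξ_k + B(x_k) on ℝᵐ, where a ∈ ℝᵐ has all entries aᵢ ∈ (0,1), B : ℝᶜ → ℝᵐ is linear, and ⊙ is the entrywise product. Assume T : ℝᵖ → ℝᵐ satisfies T(f(z)) = a ⊙ T(z) + B(h(z)) for all z, and assume T is uniformly injective with modulus α, i.e. there is α : ℝ → ℝ with α(0) = 0, α continuous at 0, α monotone nondecreasing, and α subadditive (α(s+t) ≤ α(s) + α(t) for s,t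 ≥ 0), such that ‖z₁ − z₂‖₂ ≤ α(‖T(z₁) − T(z₂)‖₂) for all z₁, z₂ ∈ ℝᵖ. Then there exists a map T* : ℝᵐ → ℝᵖ such that for every initial state z₀ ∈ ℝᵖ and every initial observer state ξ₀ ∈ ℝᵐ, the estimates ẑ_k := T*(ξ_k) satisfy ‖z_k − ẑ_k‖₂ → 0 as k → ∞. -/
/-!
The error `dist (T zₖ) (ξₖ)` decays geometrically, because the observer update is a contraction that
also carries `T zₖ` to `T zₖ₊₁`. Since `ξₖ` need not lie in the range of `T`, the inverse of `T` has
to be extended to the whole observer space: at a point `y` of the closure of the range, uniform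
injectivity turns `T w → y` into a Cauchy condition on `w`, and the value at `y` is the limit; at
any other `y` the value is a `w` with `dist (T w) y` less than twice the distance of `y` to the
range. In both cases the value at `y` is uniformly close to every `z` for which `T z` is close
to `y`.
-/

open Filter Function Metric Set
open scoped NNReal Topology Uniformity

section UniformInjectivity

/-- A map is uniformly injective if its inverse on its range is uniformly continuous: any two points
with sufficiently close images are close. The map itself need not be continuous, and in a
non-Hausdorff domain it is injective only up to inseparability. -/
def UniformlyInjective {Z Y : Type*} [UniformSpace Z] [UniformSpace Y] (T : Z → Y) : Prop :=
  comap (Prod.map T T) (𝓤 Y) ≤ 𝓤 Z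

theorem UniformlyInjective.of_dist_le {Z Y : Type*} [PseudoMetricSpace Z] [PseudoMetricSpace Y]
    {T : Z → Y} {α : ℝ → ℝ} (hα : Tendsto α (𝓝 0) (𝓝 0))
    (hT : ∀ z₁ z₂, dist z₁ z₂ ≤ α (dist (T z₁) (T z₂))) : UniformlyInjective T := by
  have images_close : Tendsto (fun q : Z × Z => dist (T q.1) (T q.2))
      (comap (Prod.map T T) (𝓤 Y)) (𝓝 0) :=
    tendsto_uniformity_iff_dist_tendsto_zero.1 tendsto_comap
  exact tendsto_id'.1 <| tendsto_uniformity_iff_dist_tendsto_zero.2 <|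
    squeeze_zero (fun _ => dist_nonneg) (fun q => hT q.1 q.2) (hα.comp images_close)

variable {Z Y : Type*} [UniformSpace Z] [CompleteSpace Z] {T : Z → Y}

theorem UniformlyInjective.exists_comap_nhds_le [UniformSpace Y] (hT : UniformlyInjective T) (y : Y)
    [NeBot (comap T (𝓝 y))] : ∃ w, comap T (𝓝 y) ≤ 𝓝 w :=
  CompleteSpace.complete (cauchy_nhds.comap hT)

variable [PseudoMetricSpace Y]

theorem UniformlyInjective.exists_near_best_approx [Nonempty Z] (hT : UniformlyInjective T)
    (y : Y) : ∃ w, ∀ V ∈ 𝓤 Z, ∀ δ > 0,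
      ∃ w', (w', w) ∈ V ∧ dist y (T w') < 2 * infDist y (range T) + δ := by
  by_cases hy : y ∈ closure (range T)
  · have : NeBot (comap T (𝓝 y)) :=
      comap_neBot_iff_frequently.2 (mem_closure_iff_frequently.1 hy)
    obtain ⟨w, hw⟩ := hT.exists_comap_nhds_le y
    refine ⟨w, fun V hV δ hδ => ?_⟩
    have near_limit : ∀ᶠ w' in comap T (𝓝 y), (w', w) ∈ V := hw (mem_nhds_right w hV)
    have image_near : ∀ᶠ w' in comap T (𝓝 y), T w' ∈ ball y δ :=
      tendsto_comap.eventually (ball_mem_nhds y hδ)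
    obtain ⟨w', hwV, hwδ⟩ := (near_limit.and image_near).exists
    rw [mem_ball'] at hwδ
    exact ⟨w', hwV, by linarith [infDist_nonneg (x := y) (s := range T)]⟩
  · have infDist_pos : 0 < infDist y (range T) :=
      (infDist_pos_iff_notMem_closure (range_nonempty T)).1 hy
    obtain ⟨_, ⟨w, rfl⟩, hw⟩ := (infDist_lt_iff (range_nonempty T)).1
      (show infDist y (range T) < 2 * infDist y (range T) by linarith)
    exact ⟨w, fun V hV δ hδ => ⟨w, refl_mem_uniformity hV, by linarith⟩⟩

theorem UniformlyInjective.exists_approx_leftInverse [Nonempty Z] (hT : UniformlyInjective T) :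
    ∃ S : Y → Z, Tendsto (Prod.map id S) (comap (Prod.map T id) (𝓤 Y)) (𝓤 Z) := by
  choose S hS using hT.exists_near_best_approx
  refine ⟨S, fun W hW => ?_⟩
  obtain ⟨V, hV, hVW⟩ := comp_mem_uniformity_sets hW
  obtain ⟨ε, hε, hεV⟩ := (uniformity_basis_dist.comap (Prod.map T T)).mem_iff.1 (hT hV)
  refine (uniformity_basis_dist.comap (Prod.map T id)).mem_iff.2 ⟨ε / 4, by positivity, ?_⟩
  rintro ⟨z, y⟩ (hzy : dist (T z) y < ε / 4)
  obtain ⟨w, hwV, hw⟩ := hS y V hV (ε / 4) (by positivity)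
  have infDist_le : infDist y (range T) ≤ dist (T z) y :=
    dist_comm y (T z) ▸ infDist_le_dist_of_mem (mem_range_self z)
  have dist_images : dist (T z) (T w) < ε := by
    linarith [dist_triangle (T z) y (T w)]
  exact hVW ⟨w, hεV dist_images, hwV⟩

end UniformInjectivity

section Contraction

theorem dist_le_pow_mul_of_lipschitz_recursion {Y : Type*} [PseudoMetricSpace Y] {K : ℝ≥0}
    {Φ : ℕ → Y → Y} (hΦ : ∀ k, LipschitzWith K (Φ k)) {u v : ℕ → Y}
    (hu : ∀ k, u (k + 1) = Φ k (u k)) (hv : ∀ k, v (k + 1) = Φ k (v k)) (k : ℕ) :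
    dist (u k) (v k) ≤ K ^ k * dist (u 0) (v 0) := by
  induction k with
  | zero => simp
  | succ k ih =>
    calc dist (u (k + 1)) (v (k + 1))
        = dist (Φ k (u k)) (Φ k (v k)) := by rw [hu, hv]
      _ ≤ K * dist (u k) (v k) := (hΦ k).dist_le_mul _ _
      _ ≤ K * (K ^ k * dist (u 0) (v 0)) := by gcongr
      _ = K ^ (k + 1) * dist (u 0) (v 0) := by ring

theorem tendsto_uniformity_of_lipschitz_recursion {Y : Type*} [PseudoMetricSpace Y] {K : ℝ≥0}
    (hK : K < 1) {Φ : ℕ → Y → Y} (hΦ : ∀ k, LipschitzWith K (Φ k)) {u v : ℕ → Y}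
    (hu : ∀ k, u (k + 1) = Φ k (u k)) (hv : ∀ k, v (k + 1) = Φ k (v k)) :
    Tendsto (fun k => (u k, v k)) atTop (𝓤 Y) := by
  have bound_tendsto : Tendsto (fun k => (K : ℝ) ^ k * dist (u 0) (v 0)) atTop (𝓝 0) := by
    simpa only [zero_mul] using
      (tendsto_pow_atTop_nhds_zero_of_lt_one K.coe_nonneg hK).mul_const (dist (u 0) (v 0))
  exact tendsto_uniformity_iff_dist_tendsto_zero.2 <| squeeze_zero (fun _ => dist_nonneg)
    (dist_le_pow_mul_of_lipschitz_recursion hΦ hu hv) bound_tendsto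

variable {𝕜 ι : Type*} [RCLike 𝕜]

/-- The affine map `ξ ↦ a ⊙ ξ + b` with diagonal linear part, by which the observer is updated
when the input term is `b`. -/
def hadamardAffine (a : ι → 𝕜) (b ξ : EuclideanSpace 𝕜 ι) : EuclideanSpace 𝕜 ι :=
  WithLp.toLp 2 fun i => a i * ξ i + b i

variable [Fintype ι]

theorem lipschitzWith_hadamardAffine {a : ι → 𝕜} {K : ℝ≥0} (ha : ∀ i, ‖a i‖ ≤ K)
    (b : EuclideanSpace 𝕜 ι) : LipschitzWith K (hadamardAffine a b) := by
  refine LipschitzWith.of_dist_le_mul fun x y => ?_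
  have dist_coord (i : ι) :
      dist (hadamardAffine a b x i) (hadamardAffine a b y i) ≤ K * dist (x i) (y i) := by
    calc dist (a i * x i + b i) (a i * y i + b i)
        = ‖a i‖ * dist (x i) (y i) := by
          rw [dist_add_right, dist_eq_norm, dist_eq_norm, ← mul_sub, norm_mul]
      _ ≤ K * dist (x i) (y i) := by gcongr; exact ha i
  calc dist (hadamardAffine a b x) (hadamardAffine a b y)
      = √(∑ i, dist (hadamardAffine a b x i) (hadamardAffine a b y i) ^ 2) :=
        EuclideanSpace.dist_eq _ _
    _ ≤ √(∑ i, (K * dist (x i) (y i)) ^ 2) := by gcongr with i; exact dist_coord i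
    _ = K * dist x y := by
      simp only [mul_pow]
      rw [← Finset.mul_sum, Real.sqrt_mul (by positivity), Real.sqrt_sq K.coe_nonneg,
        EuclideanSpace.dist_eq]

theorem exists_lt_one_lipschitzWith_hadamardAffine {a : ι → 𝕜} (ha : ∀ i, ‖a i‖ < 1) :
    ∃ K < 1, ∀ b, LipschitzWith K (hadamardAffine a b) :=
  ⟨Finset.univ.sup fun i => ‖a i‖₊, (Finset.sup_lt_iff one_pos).2 fun i _ => ha i,
    lipschitzWith_hadamardAffine fun i =>
      Finset.le_sup (f := fun i => ‖a i‖₊) (Finset.mem_univ i)⟩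

end Contraction

theorem observer_convergence_exists_Tstar_general {Z X Y : Type*} [UniformSpace Z]
    [CompleteSpace Z] [Nonempty Z] [PseudoMetricSpace Y] (f : Z → Z) (h : Z → X)
    {Φ : X → Y → Y} {K : ℝ≥0} (hK : K < 1) (hΦ : ∀ x, LipschitzWith K (Φ x)) {T : Z → Y}
    (hT : ∀ z, T (f z) = Φ (h z) (T z)) (hinj : UniformlyInjective T) :
    ∃ Tstar : Y → Z, ∀ (z₀ : Z) (ξ : ℕ → Y), (∀ k, ξ (k + 1) = Φ (h (f^[k] z₀)) (ξ k)) →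
      Tendsto (fun k => (f^[k] z₀, Tstar (ξ k))) atTop (𝓤 Z) := by
  obtain ⟨S, hS⟩ := hinj.exists_approx_leftInverse
  refine ⟨S, fun z₀ ξ hξ => ?_⟩
  have image_recursion (k : ℕ) : T (f^[k + 1] z₀) = Φ (h (f^[k] z₀)) (T (f^[k] z₀)) := by
    rw [iterate_succ_apply', hT]
  have tracking : Tendsto (fun k => (f^[k] z₀, ξ k)) atTop (comap (Prod.map T id) (𝓤 Y)) :=
    tendsto_comap_iff.2 <| tendsto_uniformity_of_lipschitz_recursion hK
      (fun k => hΦ (h (f^[k] z₀))) image_recursion hξ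
  exact hS.comp tracking

/-- Theorem 2, existence form: if `T` is uniformly injective with a
modulus `α`, then there exists `T*` such that the estimates `ẑ_k = T*(ξ_k)`
converge to the true states `z_k`. -/
theorem observer_convergence_exists_Tstar
    (p c m : ℕ)
    (f : EuclideanSpace ℝ (Fin p) → EuclideanSpace ℝ (Fin p))
    (h : EuclideanSpace ℝ (Fin p) → EuclideanSpace ℝ (Fin c))
    (a : Fin m → ℝ) (ha : ∀ i, 0 < a i ∧ a i < 1)
    (B : EuclideanSpace ℝ (Fin c) →ₗ[ℝ] EuclideanSpace ℝ (Fin m))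
    (T : EuclideanSpace ℝ (Fin p) → EuclideanSpace ℝ (Fin m))
    (hT : ∀ z, ∀ i, T (f z) i = a i * T z i + B (h z) i)
    (α : ℝ → ℝ) (hα0 : α 0 = 0) (hαcont : ContinuousAt α 0) (hαmono : Monotone α)
    (hαsub : ∀ s t : ℝ, 0 ≤ s → 0 ≤ t → α (s + t) ≤ α s + α t)
    (hinj : ∀ z₁ z₂ : EuclideanSpace ℝ (Fin p), ‖z₁ - z₂‖ ≤ α ‖T z₁ - T z₂‖) :
    ∃ Tstar : EuclideanSpace ℝ (Fin m) → EuclideanSpace ℝ (Fin p),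
      ∀ z₀ : EuclideanSpace ℝ (Fin p), ∀ ξ : ℕ → EuclideanSpace ℝ (Fin m),
        (∀ k, ∀ i, ξ (k + 1) i = a i * ξ k i + B (h (f^[k] z₀)) i) →
        Filter.Tendsto (fun k : ℕ => ‖f^[k] z₀ - Tstar (ξ k)‖) Filter.atTop (nhds 0) := by
  obtain ⟨K, hK, lipschitz⟩ := exists_lt_one_lipschitzWith_hadamardAffine
    fun i => (Real.norm_of_nonneg (ha i).1.le).trans_lt (ha i).2
  have injective : UniformlyInjective T :=
    .of_dist_le (α := α) (by simpa only [hα0] using hαcont.tendsto)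
      (by simpa only [dist_eq_norm] using hinj)
  obtain ⟨S, hS⟩ := observer_convergence_exists_Tstar_general f h hK
    (fun x => lipschitz (B x)) (fun z => PiLp.ext (hT z)) injective
  exact ⟨S, fun z₀ ξ hξ => by simpa only [dist_eq_norm] using
    tendsto_uniformity_iff_dist_tendsto_zero.1 (hS z₀ ξ fun k => PiLp.ext (hξ k))⟩
end

section
/- (McShane extension with a modulus of continuity.) Let X be a metric space, S ⊆ X a nonempty subset, and f : X → ℝ a function. Let α : ℝ → ℝ be monotone nondecreasing, subadditive on nonnegative reals (α(s+t) ≤ α(s) + α(t) for all s, t ≥ 0), with α(0) = 0, and suppose |f(x) − f(y)| ≤ α(dist(x,y)) for all x, y ∈ S. Then there exists F : X → ℝ such that F agrees with f on S and |F(x) − F(y)| ≤ α(dist(x,y)) for all x, y ∈ X. -/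
/-!
Since `α` is monotone and subadditive, `c x y = α (dist x y)` satisfies the triangle inequality.
For such a `c`, each function `x ↦ f s + c x s` with `s ∈ S` has modulus `c`, hence so does their
infimum over `s`. At `x ∉ S` this infimum is within `c x s` of `f s` for every `s ∈ S`, so gluing
it to `f` along `S` preserves the modulus.
-/

open Set

section Kernel

variable {X : Type*} {c : X → X → ℝ} {f : X → ℝ} {S : Set X}

/-- McShane's formula for extending `f` off `S`, with a kernel `c` in the role of `α (dist · ·)`.
On `S` it may differ from `f` if `c` does not vanish on the diagonal; where the infimum is over the
empty set or unbounded below it takes the junk value `0`. -/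
noncomputable def mcshaneEnvelope (c : X → X → ℝ) (f : X → ℝ) (S : Set X) (x : X) : ℝ :=
  ⨅ s : S, (f s + c x s)

lemma sub_le_add_of_triangle (htri : ∀ x y z, c x z ≤ c x y + c y z)
    (hf : ∀ x ∈ S, ∀ y ∈ S, f x - f y ≤ c x y) {s t : X} (hs : s ∈ S) (ht : t ∈ S) (x : X) :
    f s - c s x ≤ f t + c x t := by
  linarith [hf s hs t ht, htri s x t]

lemma sub_le_mcshaneEnvelope (htri : ∀ x y z, c x z ≤ c x y + c y z)
    (hf : ∀ x ∈ S, ∀ y ∈ S, f x - f y ≤ c x y) {s : X} (hs : s ∈ S) (x : X) :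
    f s - c s x ≤ mcshaneEnvelope c f S x :=
  have : Nonempty S := ⟨⟨s, hs⟩⟩
  le_ciInf fun t => sub_le_add_of_triangle htri hf hs t.2 x

lemma mcshaneEnvelope_le_add (htri : ∀ x y z, c x z ≤ c x y + c y z)
    (hf : ∀ x ∈ S, ∀ y ∈ S, f x - f y ≤ c x y) {s : X} (hs : s ∈ S) (x : X) :
    mcshaneEnvelope c f S x ≤ f s + c x s :=
  have hbdd : BddBelow (range fun t : S => f t + c x t) :=
    ⟨f s - c s x, forall_mem_range.2 fun t => sub_le_add_of_triangle htri hf hs t.2 x⟩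
  ciInf_le hbdd ⟨s, hs⟩

lemma mcshaneEnvelope_sub_le (htri : ∀ x y z, c x z ≤ c x y + c y z)
    (hf : ∀ x ∈ S, ∀ y ∈ S, f x - f y ≤ c x y) (hS : S.Nonempty) (x y : X) :
    mcshaneEnvelope c f S x - mcshaneEnvelope c f S y ≤ c x y := by
  have : Nonempty S := hS.to_subtype
  suffices mcshaneEnvelope c f S x - c x y ≤ mcshaneEnvelope c f S y by linarith
  refine le_ciInf fun s => ?_
  linarith [mcshaneEnvelope_le_add htri hf s.2 x, htri x y s]

theorem exists_eqOn_forall_sub_le (htri : ∀ x y z, c x z ≤ c x y + c y z)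
    (hf : ∀ x ∈ S, ∀ y ∈ S, f x - f y ≤ c x y) :
    ∃ F : X → ℝ, EqOn F f S ∧ ∀ x y, F x - F y ≤ c x y := by
  classical
  obtain rfl | hS := S.eq_empty_or_nonempty
  · obtain _ | ⟨⟨x₀⟩⟩ := isEmpty_or_nonempty X
    · exact ⟨f, eqOn_empty _ _, isEmptyElim⟩
    · exact ⟨fun x => c x x₀, eqOn_empty _ _, fun x y => sub_le_iff_le_add.2 (htri x y x₀)⟩
  · refine ⟨S.piecewise f (mcshaneEnvelope c f S), S.piecewise_eqOn _ _, fun x y => ?_⟩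
    by_cases hx : x ∈ S <;> by_cases hy : y ∈ S <;> simp only [piecewise, hx, hy, if_true, if_false]
    · exact hf x hx y hy
    · exact sub_le_comm.1 (sub_le_mcshaneEnvelope htri hf hx y)
    · exact sub_le_iff_le_add'.2 (mcshaneEnvelope_le_add htri hf hy x)
    · exact mcshaneEnvelope_sub_le htri hf hS x y

end Kernel

theorem mcshane_extension_modulus_general
    {X : Type*} [PseudoMetricSpace X] (S : Set X) (f : X → ℝ) (α : ℝ → ℝ)
    (hαmono : MonotoneOn α (Ici 0))
    (hαsub : ∀ s t : ℝ, 0 ≤ s → 0 ≤ t → α (s + t) ≤ α s + α t)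
    (hf : ∀ x ∈ S, ∀ y ∈ S, |f x - f y| ≤ α (dist x y)) :
    ∃ F : X → ℝ, (∀ x ∈ S, F x = f x) ∧
      ∀ x y : X, |F x - F y| ≤ α (dist x y) := by
  have htri (x y z : X) : α (dist x z) ≤ α (dist x y) + α (dist y z) :=
    calc α (dist x z) ≤ α (dist x y + dist y z) :=
          hαmono dist_nonneg (add_nonneg dist_nonneg dist_nonneg) (dist_triangle x y z)
      _ ≤ α (dist x y) + α (dist y z) := hαsub _ _ dist_nonneg dist_nonneg
  obtain ⟨F, hFf, hF⟩ :=
    exists_eqOn_forall_sub_le htri fun x hx y hy => (le_abs_self _).trans (hf x hx y hy)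
  exact ⟨F, hFf, fun x y => abs_sub_le_iff.2 ⟨hF x y, dist_comm x y ▸ hF y x⟩⟩

/-- McShane extension with a modulus of continuity: a real-valued
function with modulus `α` on a nonempty subset `S` of a metric space extends to
the whole space with the same modulus. -/
theorem mcshane_extension_modulus
    {X : Type*} [MetricSpace X] (S : Set X) (hS : S.Nonempty)
    (f : X → ℝ) (α : ℝ → ℝ)
    (hαmono : Monotone α)
    (hαsub : ∀ s t : ℝ, 0 ≤ s → 0 ≤ t → α (s + t) ≤ α s + α t)
    (hα0 : α 0 = 0)
    (hf : ∀ x ∈ S, ∀ y ∈ S, |f x - f y| ≤ α (dist x y)) :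
    ∃ F : X → ℝ, (∀ x ∈ S, F x = f x) ∧
      ∀ x y : X, |F x - F y| ≤ α (dist x y) :=
  mcshane_extension_modulus_general S f α (hαmono.monotoneOn _) hαsub hf
end
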